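/- Bound on the interference cross term: with the notation below, V(D) = Σ_{k1D,k10,k2D,k20} C(k1D,k10,k2D,k20)·((P^D)_{k1D,k10} − π)·((P^D)_{k2D,k20} − π)·π² satisfies V(D) ≤ c₁·λ^D, where c₁ = Σ_{k1D,k2D} (max_{k10,k20} C(k1D,k10,k2D,k20))·π. -/

import Mathlib

/-!
Fix the two row indices `k1D`, `k2D` and replace the weight by its maximum over the column indices.
The remaining double sum factors into the product of the `ℓ¹` norms of the two rows of deviations,
each at most `√(λ^D / π)`. The two masses `π` in the summand then leave the geometric mean
of the row masses, which is `π` itself when these are equal.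
-/

theorem le_univ_sup'_sup' {κ κ' α : Type*} [Fintype κ] [Fintype κ'] [Nonempty κ] [Nonempty κ']
    [SemilatticeSup α] (f : κ → κ' → α) (i : κ) (j : κ') :
    f i j ≤ Finset.univ.sup' Finset.univ_nonempty fun i =>
      Finset.univ.sup' Finset.univ_nonempty fun j => f i j :=
  (Finset.le_sup' (f i) (Finset.mem_univ j)).trans
    (Finset.le_sup' (fun i => Finset.univ.sup' Finset.univ_nonempty (f i)) (Finset.mem_univ i))

theorem sum_sum_mul_mul_le_mul_sum_abs {R κ κ' : Type*}
    [CommRing R] [LinearOrder R] [IsStrictOrderedRing R] [Fintype κ] [Fintype κ']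
    {W : κ → κ' → R} {M : R} (hW : ∀ i j, |W i j| ≤ M) (u : κ → R) (v : κ' → R) :
    ∑ i, ∑ j, W i j * u i * v j ≤ M * ((∑ i, |u i|) * ∑ j, |v j|) := by
  rw [Finset.sum_mul_sum]
  simp only [Finset.mul_sum]
  refine Finset.sum_le_sum fun i _ => Finset.sum_le_sum fun j _ => ?_
  calc W i j * u i * v j ≤ |W i j * u i * v j| := le_abs_self _
    _ = |W i j| * (|u i| * |v j|) := by rw [abs_mul, abs_mul, mul_assoc]
    _ ≤ M * (|u i| * |v j|) := by gcongr; exact hW i j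

theorem mul_mul_mul_le_sqrt_mul {p q x y ε : ℝ} (hp : 0 ≤ p) (hq : 0 ≤ q)
    (hx : p * x ^ 2 ≤ ε) (hy : q * y ^ 2 ≤ ε) :
    p * q * (x * y) ≤ √(p * q) * ε := by
  have hxy : √p * x * (√q * y) ≤ ε := by
    have amgm := two_mul_le_add_sq (√p * x) (√q * y)
    rw [mul_pow, mul_pow, Real.sq_sqrt hp, Real.sq_sqrt hq] at amgm
    linarith
  calc p * q * (x * y) = √(p * q) * √(p * q) * (x * y) := by
        rw [Real.mul_self_sqrt (mul_nonneg hp hq)]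
    _ = √(p * q) * (√p * x * (√q * y)) := by rw [Real.sqrt_mul hp]; ring
    _ ≤ √(p * q) * ε := by gcongr

theorem interference_cross_term_bound_general {ι κ : Type*} [Fintype ι] [Fintype κ] [Nonempty κ]
    (E : ι → κ → ℝ) (π : ι → ℝ) (hπ : ∀ l, 0 ≤ π l) (ε : ℝ)
    (hE : ∀ l, π l * (∑ m, |E l m|) ^ 2 ≤ ε)
    (C : ι × κ × ι × κ → ℝ) (hC : ∀ x, 0 ≤ C x) :
    (∑ k1D : ι, ∑ k10 : κ, ∑ k2D : ι, ∑ k20 : κ,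
        C (k1D, k10, k2D, k20) * E k1D k10 * E k2D k20 * (π k1D * π k2D))
      ≤ (∑ k1D : ι, ∑ k2D : ι,
          (Finset.univ.sup' Finset.univ_nonempty fun k10 : κ =>
            Finset.univ.sup' Finset.univ_nonempty fun k20 : κ =>
              C (k1D, k10, k2D, k20)) * √(π k1D * π k2D)) * ε := by
  rw [Finset.sum_mul]
  refine Finset.sum_le_sum fun a _ => ?_
  rw [Finset.sum_comm, Finset.sum_mul]
  refine Finset.sum_le_sum fun b _ => ?_
  set M := Finset.univ.sup' Finset.univ_nonempty fun i : κ =>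
    Finset.univ.sup' Finset.univ_nonempty fun j : κ => C (a, i, b, j)
  have hCM (i j : κ) : C (a, i, b, j) ≤ M := le_univ_sup'_sup' (fun i j => C (a, i, b, j)) i j
  have hM : 0 ≤ M := (hC _).trans (hCM (Classical.arbitrary κ) (Classical.arbitrary κ))
  have hππ : 0 ≤ π a * π b := mul_nonneg (hπ a) (hπ b)
  calc ∑ i, ∑ j, C (a, i, b, j) * E a i * E b j * (π a * π b)
      = (∑ i, ∑ j, C (a, i, b, j) * E a i * E b j) * (π a * π b) := by
        simp only [Finset.sum_mul]
    _ ≤ M * ((∑ i, |E a i|) * ∑ j, |E b j|) * (π a * π b) := by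
        gcongr
        exact sum_sum_mul_mul_le_mul_sum_abs
          (fun i j => (abs_of_nonneg (hC _)).trans_le (hCM i j)) (E a) (E b)
    _ = M * (π a * π b * ((∑ i, |E a i|) * ∑ j, |E b j|)) := by ring
    _ ≤ M * (√(π a * π b) * ε) :=
        mul_le_mul_of_nonneg_left (mul_mul_mul_le_sqrt_mul (hπ a) (hπ b) (hE a) (hE b)) hM
    _ = M * √(π a * π b) * ε := (mul_assoc _ _ _).symm

/-- Bound on the interference cross term: `V(D) ≤ c₁ · λ^D`, where
`V(D) = Σ C·((P^D)_{k1D,k10} − π)·((P^D)_{k2D,k20} − π)·π²`,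
`c₁ = Σ_{k1D,k2D} (max_{k10,k20} C)·π`, and `π = 1/N`.
`P` is row stochastic and satisfies the Markov convergence bound
`(Σ_m |(P^D)_{lm} − 1/N|)² ≤ N·λ^D` (i.e. `λ^D / π_l`). -/
theorem interference_cross_term_bound (N : ℕ) [NeZero N]
    (P : Matrix (Fin N) (Fin N) ℝ)
    (hP0 : ∀ l m, 0 ≤ P l m) (hP1 : ∀ l, ∑ m, P l m = 1)
    (lam : ℝ) (hlam0 : 0 ≤ lam) (hlam1 : lam ≤ 1) (D : ℕ)
    (hconv : ∀ l, (∑ m, |(P ^ D) l m - 1 / (N : ℝ)|) ^ 2 ≤ (N : ℝ) * lam ^ D)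
    (C : Fin N × Fin N × Fin N × Fin N → ℝ) (hC : ∀ x, 0 ≤ C x) :
    (∑ k1D : Fin N, ∑ k10 : Fin N, ∑ k2D : Fin N, ∑ k20 : Fin N,
        C (k1D, k10, k2D, k20) * ((P ^ D) k1D k10 - 1 / (N : ℝ))
          * ((P ^ D) k2D k20 - 1 / (N : ℝ)) * (1 / (N : ℝ)) ^ 2)
      ≤ (∑ k1D : Fin N, ∑ k2D : Fin N,
          (Finset.univ.sup' Finset.univ_nonempty fun k10 : Fin N =>
            Finset.univ.sup' Finset.univ_nonempty fun k20 : Fin N =>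
              C (k1D, k10, k2D, k20)) * (1 / (N : ℝ))) * lam ^ D := by
  have hN : (0 : ℝ) < N := Nat.cast_pos.mpr (NeZero.pos N)
  have hπ : (0 : ℝ) ≤ 1 / N := by positivity
  simpa only [← sq, Real.sqrt_sq hπ] using
    interference_cross_term_bound_general (fun l m => (P ^ D) l m - 1 / (N : ℝ))
      (fun _ => 1 / (N : ℝ)) (fun _ => hπ) (lam ^ D)
      (fun l => (one_div_mul_eq_div _ _).trans_le ((div_le_iff₀' hN).mpr (hconv l))) C hC
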